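/- If the maximum length of a directed cycle in an n-vertex strongly connected directed graph G is at most ℓ (with ℓ ≥ 2), then every set S ⊆ E of edges that strongly connects G satisfies |S| ≥ (n−1)·ℓ/(ℓ−1). -/

import Mathlib

/-- A set `S` of directed edges strongly connects the vertex set `V`:
for every pair of vertices there is a directed path using only edges of `S`. -/
def StronglyConnects {V : Type*} (S : Set (V × V)) : Prop :=
  ∀ u v : V, Relation.ReflTransGen (fun a b => (a, b) ∈ S) u v

/-- The edges of the closed walk determined by the vertex list `c`
(consecutive pairs, wrapping around from the last vertex to the first). -/
def cycleEdges {V : Type*} (c : List V) : List (V × V) := c.zip (c.rotate 1)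

/-- `c` is a directed cycle of the graph with edge set `E`: a nonempty list of
distinct vertices all of whose consecutive (wrap-around) pairs are edges.
Its length (number of edges) is `c.length`. -/
def IsCycle {V : Type*} (E : Set (V × V)) (c : List V) : Prop :=
  c ≠ [] ∧ c.Nodup ∧ ∀ e ∈ cycleEdges c, e ∈ E

/-- An edge is redundant if deleting it leaves a strongly connected graph. -/
def Redundant {V : Type*} (E : Set (V × V)) (e : V × V) : Prop :=
  e ∈ E ∧ StronglyConnects (E \ {e})

/-- An edge is necessary if deleting it destroys strong connectivity. -/
def Necessary {V : Type*} (E : Set (V × V)) (e : V × V) : Prop :=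
  e ∈ E ∧ ¬ StronglyConnects (E \ {e})

/-- The set of necessary edges. -/
def necessarySet {V : Type*} (E : Set (V × V)) : Set (V × V) :=
  {e | Necessary E e}

/-- An edge `(u, v)` is unsatisfied if there is no directed path from `v`
back to `u` consisting only of necessary edges. -/
def Unsatisfied {V : Type*} (E : Set (V × V)) (e : V × V) : Prop :=
  e ∈ E ∧ ¬ Relation.ReflTransGen (fun a b => Necessary E (a, b)) e.2 e.1

/-- A redundant edge `r` provides a cycle for an unsatisfied edge `(u, v)` if
there is a directed path from `v` to `u` consisting of necessary edges and `r`. -/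
def ProvidesCycle {V : Type*} (E : Set (V × V)) (r : V × V) (e : V × V) : Prop :=
  Relation.ReflTransGen (fun a b => Necessary E (a, b) ∨ (a, b) = r) e.2 e.1

/-- `w` is a cut vertex: deleting `w` disconnects the underlying undirected graph,
i.e. some two vertices distinct from `w` are joined by no undirected path avoiding `w`. -/
def IsCutVertex {V : Type*} (E : Set (V × V)) (w : V) : Prop :=
  ∃ u v : V, u ≠ w ∧ v ≠ w ∧
    ¬ Relation.ReflTransGen
        (fun a b => a ≠ w ∧ b ≠ w ∧ ((a, b) ∈ E ∨ (b, a) ∈ E)) u v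

theorem aux_path {V : Type*} {r : V → V → Prop} {a b : V} (h : Relation.ReflTransGen r a b) :
    ∃ l : List V, (a :: l).IsChain r ∧ (a :: l).Nodup ∧ (a :: l).getLast (by simp) = b := by
  induction h using Relation.ReflTransGen.head_induction_on with
  | refl => exact ⟨[], by simp⟩
  | head hac hcb ih =>
    rename_i a c
    obtain ⟨l, hc, hn, hl⟩ := ih
    by_cases ha : a ∈ c :: l
    · obtain ⟨s, t, hst⟩ := List.append_of_mem ha
      refine ⟨t, ?_, ?_, ?_⟩
      · rw [hst] at hc
        exact (List.isChain_append.1 hc).2.1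
      · rw [hst] at hn
        exact (List.nodup_append.1 hn).2.1
      · rw [← hl]
        simp [hst]
    · exact ⟨c :: l, by simp [hac, hc], List.nodup_cons.2 ⟨ha, hn⟩, by simpa using hl⟩

theorem aux_reach {V : Type*} {r : V → V → Prop} (l : List V) : ∀ a : V, (a :: l).IsChain r →
    ∀ u ∈ a :: l, Relation.ReflTransGen r a u ∧
      Relation.ReflTransGen r u ((a :: l).getLast (by simp)) := by
  induction l with
  | nil => intro a _ u hu; simp at hu; subst hu; exact ⟨.refl, .refl⟩
  | cons c l ih =>
    intro a h u hu
    rw [List.isChain_cons_cons] at h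
    have key := ih c h.2
    rw [List.getLast_cons (by simp)]
    rcases List.mem_cons.1 hu with rfl | hu
    · exact ⟨.refl, .head h.1 (key c (by simp)).2⟩
    · exact ⟨.head h.1 (key u hu).1, (key u hu).2⟩

theorem aux_mem {V : Type*} {r : V → V → Prop} (l : List V) (h : l.IsChain r) :
    l.IsChain (fun a b => r a b ∧ a ∈ l ∧ b ∈ l) := by
  induction l with
  | nil => simp
  | cons a l ih =>
    cases l with
    | nil => simp
    | cons c l =>
      rw [List.isChain_cons_cons] at h ⊢
      refine ⟨⟨h.1, by simp, by simp⟩, (ih h.2).imp ?_⟩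
      rintro x y ⟨h1, h2, h3⟩
      exact ⟨h1, List.mem_cons_of_mem _ h2, List.mem_cons_of_mem _ h3⟩

theorem aux_zip {V : Type*} {S : Set (V × V)} (w : V) (t : List V) : ∀ v : V,
    (v :: t).IsChain (fun a b => (a, b) ∈ S) → ((v :: t).getLast (by simp), w) ∈ S →
    ∀ e ∈ (v :: t).zip (t ++ [w]), e ∈ S := by
  induction t with
  | nil => intro v _ h e he; simp at he h; subst he; exact h
  | cons c t ih =>
    intro v h hl e he
    rw [List.isChain_cons_cons] at h
    rw [List.getLast_cons (by simp)] at hl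
    simp only [List.cons_append, List.zip_cons_cons, List.mem_cons] at he
    rcases he with rfl | he
    · exact h.1
    · exact ih c h.2 hl e (by simpa using he)

theorem aux_first {V : Type*} {S : Set (V × V)} {A : Set V} {v b : V}
    (h : Relation.ReflTransGen (fun a b => (a, b) ∈ S) v b) (hb : b ∈ A) :
    ∃ y ∈ A, Relation.ReflTransGen (fun a b => (a, b) ∈ S ∧ a ∉ A) v y := by
  induction h using Relation.ReflTransGen.head_induction_on with
  | refl => exact ⟨b, hb, .refl⟩
  | head hac hcb ih =>
    rename_i a c
    by_cases ha : a ∈ A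
    · exact ⟨a, ha, .refl⟩
    · obtain ⟨y, hy, h⟩ := ih
      exact ⟨y, hy, .head ⟨hac, ha⟩ h⟩

theorem aux_exit {V : Type*} {S : Set (V × V)} {A : Set V} {a b : V}
    (h : Relation.ReflTransGen (fun a b => (a, b) ∈ S) a b) (ha : a ∈ A) (hb : b ∉ A) :
    ∃ x ∈ A, ∃ v ∉ A, (x, v) ∈ S := by
  induction h using Relation.ReflTransGen.head_induction_on with
  | refl => exact absurd ha hb
  | head hac hcb ih =>
    rename_i a c
    by_cases hc : c ∈ A
    · exact ih hc
    · exact ⟨a, ha, c, hc, hac⟩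

/-- invariant of the ear construction -/
def EarInv {V : Type*} (S : Set (V × V)) (m : ℕ) (A : Set V) : Prop :=
  A.Nonempty ∧ (∀ a ∈ A, ∀ b ∈ A,
    Relation.ReflTransGen (fun a b => (a, b) ∈ S ∧ a ∈ A ∧ b ∈ A) a b) ∧
  A.ncard * (m + 1) ≤ (S ∩ A ×ˢ A).ncard * m + (m + 1)

theorem aux_step {V : Type*} [Finite V] (S : Set (V × V)) (m : ℕ)
    (hcyc : ∀ c : List V, IsCycle S c → c.length ≤ m + 1) (hS : StronglyConnects S)
    (A : Set V) (hA : EarInv S m A) (hne : A ≠ Set.univ) :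
    ∃ B, EarInv S m B ∧ A ⊂ B := by
  classical
  obtain ⟨⟨a0, ha0⟩, hconn, hcard⟩ := hA
  obtain ⟨b0, hb0⟩ := (Set.ne_univ_iff_exists_notMem A).1 hne
  obtain ⟨x, hx, v, hv, hxv⟩ := aux_exit (hS a0 b0) ha0 hb0
  obtain ⟨y, hy, hvy⟩ := aux_first (hS v a0) ha0
  obtain ⟨l, hlc, hln, hll⟩ := aux_path hvy
  obtain ⟨t, rfl⟩ : ∃ t, l = t ++ [y] := by
    rcases List.eq_nil_or_concat' l with rfl | ⟨t, z, rfl⟩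
    · simp at hll; subst hll; exact absurd hy hv
    · refine ⟨t, ?_⟩
      simp at hll; rw [hll]
  obtain ⟨p, hpc, hpn, hpl⟩ := aux_path (hconn y hy x hx)
  have hpA : ∀ u ∈ y :: p, u ∈ A := by
    intro u hu
    rcases Relation.ReflTransGen.cases_tail (aux_reach p y hpc u hu).1 with h | ⟨c, _, h⟩
    · rw [h]; exact hy
    · exact h.2.2
  have hqA : ∀ u ∈ v :: t, u ∉ A := by
    intro u hu
    have hu' : u ∈ v :: (t ++ [y]) := by simp at hu ⊢; tauto
    have huy : u ≠ y := by
      rintro rfl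
      rw [← List.cons_append, List.nodup_append] at hln
      exact hln.2.2 u hu u (by simp) rfl
    have := (aux_reach _ _ hlc u hu').2
    rw [hll] at this
    rcases Relation.ReflTransGen.cases_head this with h | ⟨c, h, _⟩
    · exact absurd h huy
    · exact h.2
  have hqn : (v :: t).Nodup := by
    rw [← List.cons_append, List.nodup_append] at hln
    exact hln.1
  -- the cycle
  have hlen : (t.length + 1) ≤ m := by
    have := hcyc (v :: (t ++ y :: p)) ⟨by simp, ?_, ?_⟩
    · simp at this; omega
    · rw [← List.cons_append, List.nodup_append]
      refine ⟨hqn, hpn, ?_⟩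
      rintro a ha b hb rfl
      exact hqA a ha (hpA a hb)
    · intro e he
      refine aux_zip v (t ++ y :: p) v ?_ ?_ e (by simpa [cycleEdges] using he)
      · have h1 : (v :: (t ++ [y])).IsChain (fun a b => (a, b) ∈ S) := hlc.imp (fun _ _ h => h.1)
        have h2 : (y :: p).IsChain (fun a b => (a, b) ∈ S) := hpc.imp (fun _ _ h => h.1)
        rw [← List.cons_append, List.isChain_append] at h1 ⊢
        refine ⟨h1.1, h2, ?_⟩
        intro a ha b hb
        refine h1.2.2 a ha b ?_
        simpa using hb
      · have : (v :: (t ++ y :: p)).getLast (by simp) = x := by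
          rw [← hpl, List.getLast_cons (by simp), List.getLast_append_of_ne_nil]
        rw [this]; exact hxv
  -- the new set
  set B : Set V := A ∪ {u | u ∈ v :: t} with hB
  have hAB : A ⊆ B := Set.subset_union_left
  have hvB : v ∈ B := Or.inr (by simp)
  have hlB : (v :: (t ++ [y])).IsChain (fun a b => (a, b) ∈ S ∧ a ∈ B ∧ b ∈ B) := by
    have hm : ∀ u ∈ v :: (t ++ [y]), u ∈ B := by
      intro u hu
      rw [← List.cons_append, List.mem_append] at hu
      rcases hu with hu | hu
      · exact Or.inr hu
      · simp at hu; subst hu; exact hAB hy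
    exact (aux_mem _ hlc).imp (fun a b h => ⟨h.1.1, hm a h.2.1, hm b h.2.2⟩)
  have hAconn : ∀ a ∈ A, ∀ b ∈ A,
      Relation.ReflTransGen (fun a b => (a, b) ∈ S ∧ a ∈ B ∧ b ∈ B) a b :=
    fun a ha b hb => Relation.ReflTransGen.mono (r := fun a b => (a, b) ∈ S ∧ a ∈ A ∧ b ∈ A)
      (fun _ _ h => ⟨h.1, hAB h.2.1, hAB h.2.2⟩) _ _ (hconn a ha b hb)
  have hto : ∀ u ∈ B, Relation.ReflTransGen (fun a b => (a, b) ∈ S ∧ a ∈ B ∧ b ∈ B) u y := by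
    rintro u (hu | hu)
    · exact hAconn u hu y hy
    · have := (aux_reach _ _ hlB u (by simp at hu ⊢; tauto)).2
      rwa [hll] at this
  have hfrom : ∀ u ∈ B, Relation.ReflTransGen (fun a b => (a, b) ∈ S ∧ a ∈ B ∧ b ∈ B) y u := by
    rintro u (hu | hu)
    · exact hAconn y hy u hu
    · have := (aux_reach _ _ hlB u (by simp at hu ⊢; tauto)).1
      exact (hAconn y hy x hx).trans (.head ⟨hxv, hAB hx, hvB⟩ this)
  refine ⟨B, ⟨⟨v, hvB⟩, fun a ha b hb => (hto a ha).trans (hfrom b hb), ?_⟩,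
    hAB, fun h => hv (h hvB)⟩
  have hout : ∀ u, ∃ w, u ∈ v :: t → (u, w) ∈ S ∧ u ∈ B ∧ w ∈ B := by
    intro u
    by_cases hu : u ∈ v :: t
    · rcases Relation.ReflTransGen.cases_head (hto u (Or.inr hu)) with h | ⟨c, h, _⟩
      · exact absurd (h ▸ hy) (hqA u hu)
      · exact ⟨c, fun _ => h⟩
    · exact ⟨u, fun h => absurd h hu⟩
  choose f hf using hout
  have hQ : ({u | u ∈ v :: t} : Set V).ncard = t.length + 1 := by
    rw [← List.coe_toFinset, Set.ncard_coe_finset, List.toFinset_card_of_nodup hqn]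
    simp
  have hBcard : B.ncard = A.ncard + (t.length + 1) := by
    rw [hB, Set.ncard_union_eq _ (Set.toFinite _) (Set.toFinite _), hQ]
    rw [Set.disjoint_left]
    intro a ha h; exact hqA a h ha
  have hE : (S ∩ A ×ˢ A).ncard + (t.length + 1) + 1 ≤ (S ∩ B ×ˢ B).ncard := by
    have hI : ((fun u => (u, f u)) '' {u | u ∈ v :: t}).ncard = t.length + 1 := by
      rw [Set.ncard_image_of_injective _ (fun a b h => (Prod.ext_iff.1 h).1), hQ]
    have h1 : (S ∩ A ×ˢ A ∪ (fun u => (u, f u)) '' {u | u ∈ v :: t}).ncard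
        = (S ∩ A ×ˢ A).ncard + (t.length + 1) := by
      rw [Set.ncard_union_eq _ (Set.toFinite _) (Set.toFinite _), hI]
      rw [Set.disjoint_left]
      rintro _ h ⟨u, hu, rfl⟩
      exact hqA u hu h.2.1
    rw [← h1, ← Set.ncard_insert_of_notMem (a := (x, v)) _ (Set.toFinite _)]
    · refine Set.ncard_le_ncard ?_ (Set.toFinite _)
      rintro e (rfl | h | ⟨u, hu, rfl⟩)
      · exact ⟨hxv, hAB hx, hvB⟩
      · exact ⟨h.1, hAB h.2.1, hAB h.2.2⟩
      · exact ⟨(hf u hu).1, (hf u hu).2⟩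
    · rintro (h | ⟨u, hu, h⟩)
      · exact hv h.2.2
      · have : u = x := (Prod.ext_iff.1 h).1
        subst this
        exact hqA u hu hx
  rw [hBcard]
  nlinarith [Nat.mul_le_mul_right m hE]

/-- If every directed cycle of an `n`-vertex strongly connected
digraph has at most `ℓ ≥ 2` edges, then every strongly connecting subset `S ⊆ E`
satisfies `|S| ≥ (n − 1)·ℓ/(ℓ − 1)`. -/
theorem scss_lower_bound {V : Type*} [Fintype V] (E : Set (V × V)) (ℓ : ℕ)
    (hℓ : 2 ≤ ℓ)
    (hconn : StronglyConnects E)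
    (hcyc : ∀ c : List V, IsCycle E c → c.length ≤ ℓ)
    (S : Set (V × V)) (hS : S ⊆ E) (hSconn : StronglyConnects S) :
    ((Fintype.card V : ℝ) - 1) * ℓ / (ℓ - 1) ≤ (S.ncard : ℝ) := by
  classical
  obtain ⟨m, rfl⟩ : ∃ m, ℓ = m + 1 := ⟨ℓ - 1, by omega⟩
  have hm : (0 : ℝ) < m := by exact_mod_cast (by omega : 0 < m)
  have key : Fintype.card V * (m + 1) ≤ S.ncard * m + (m + 1) := by
    rcases isEmpty_or_nonempty V with hV | ⟨⟨a⟩⟩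
    · simp
    have hinit : EarInv S m {a} := by
      refine ⟨⟨a, rfl⟩, ?_, by simp⟩
      rintro _ rfl _ rfl
      exact .refl
    obtain ⟨A, hA, hmax⟩ := (Set.toFinite {A | EarInv S m A}).exists_maximal ⟨_, hinit⟩
    have hu : A = Set.univ := by
      by_contra hne
      obtain ⟨B, hB, hAB⟩ := aux_step S m
        (fun c hc => hcyc c ⟨hc.1, hc.2.1, fun e he => hS (hc.2.2 e he)⟩) hSconn A hA hne
      exact hAB.2 (hmax hB hAB.1)
    subst hu
    simpa [Set.ncard_univ, Nat.card_eq_fintype_card] using hA.2.2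
  have key' : (Fintype.card V : ℝ) * (m + 1) ≤ S.ncard * m + (m + 1) := by exact_mod_cast key
  push_cast
  rw [add_sub_cancel_right, div_le_iff₀ hm]
  linarith
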